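/- arXiv:2312.06884 — 4 statements merged into one kernel-verified Lean document; each statement's English description precedes it below -/
import Mathlib

section
/- Let B be an n×n real symmetric matrix, g ∈ ℝⁿ, and Δ > 0. A vector s* ∈ ℝⁿ with ‖s*‖₂ ≤ Δ is a global minimizer of the trust-region subproblem, i.e. of the quadratic q(s) = gᵀs + (1/2) sᵀBs over the closed Euclidean ball {s ∈ ℝⁿ : ‖s‖₂ ≤ Δ}, if and only if there exists a scalar σ* ≥ 0 such that (B + σ*I) s* = −g, σ*(Δ − ‖s*‖₂) = 0, and the matrix B + σ*I is positive semidefinite. -/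
open Matrix

lemma tr_scalar (a b c e : ℝ) (he : 0 < e)
    (h : ∀ t, 0 < t → t < e → 0 ≤ a + t * b + t ^ 2 * c) : 0 ≤ a := by
  have h1 : Filter.Tendsto (fun t : ℝ => a + t * b + t ^ 2 * c) (nhdsWithin 0 (Set.Ioi 0))
      (nhds a) := by
    have : Continuous (fun t : ℝ => a + t * b + t ^ 2 * c) := by fun_prop
    have h2 := (this.tendsto 0).mono_left (nhdsWithin_le_nhds (s := Set.Ioi 0))
    simpa using h2
  refine ge_of_tendsto h1 ?_
  filter_upwards [Ioo_mem_nhdsGT he] with t ht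
  exact h t ht.1 ht.2

lemma tr_abstract {E : Type*} [NormedAddCommGroup E] [InnerProductSpace ℝ E]
    (T : E →ₗ[ℝ] E) (hT : ∀ x y, inner ℝ x (T y) = inner ℝ y (T x)) (g : E) (Δ : ℝ) (hΔ : 0 < Δ)
    (u : E) (hu : ‖u‖ ≤ Δ) :
    (∀ s : E, ‖s‖ ≤ Δ → inner ℝ g u + (1 / 2) * inner ℝ u (T u) ≤
      inner ℝ g s + (1 / 2) * inner ℝ s (T s)) ↔
    ∃ σ : ℝ, 0 ≤ σ ∧ T u + σ • u = -g ∧ σ * (Δ - ‖u‖) = 0 ∧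
      ∀ x, 0 ≤ inner ℝ x (T x) + σ * inner ℝ x x := by
  constructor
  · intro h
    have hq : ∀ d : E, ‖u + d‖ ≤ Δ → 0 ≤ inner ℝ (T u + g) d + (1 / 2) * inner ℝ d (T d) := by
      intro d hd
      have h1 := h _ hd
      have h2 := hT u d
      have h3 := real_inner_comm d (T u)
      simp only [inner_add_left, inner_add_right, map_add] at h1 ⊢
      linarith
    have hexp : ∀ (d : E) (t : ℝ), ‖u + t • d‖ ^ 2
        = ‖u‖ ^ 2 + t * (2 * inner ℝ u d) + t ^ 2 * ‖d‖ ^ 2 := by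
      intro d t
      rw [norm_add_sq_real, norm_smul, mul_pow, inner_smul_right, Real.norm_eq_abs, sq_abs]
      ring
    have hqt : ∀ (d : E) (t : ℝ), ‖u + t • d‖ ≤ Δ →
        0 ≤ t * inner ℝ (T u + g) d + t ^ 2 * ((1 / 2) * inner ℝ d (T d)) := by
      intro d t hd
      have h1 := hq _ hd
      simp only [map_smul, inner_smul_left, inner_smul_right] at h1
      simp only [conj_trivial] at h1
      linarith
    set r := T u + g with hr
    rcases hu.lt_or_eq with hlt | heq
    · have hfeas : ∀ d : E, ∃ e : ℝ, 0 < e ∧ ∀ t, 0 < t → t < e → ‖u + t • d‖ ≤ Δ := by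
        intro d
        have hp : 0 < ‖d‖ + 1 := by positivity
        refine ⟨(Δ - ‖u‖) / (‖d‖ + 1), div_pos (by linarith) hp, ?_⟩
        intro t ht hte
        rw [lt_div_iff₀ hp] at hte
        have := norm_add_le u (t • d)
        rw [norm_smul, Real.norm_of_nonneg ht.le] at this
        linarith
      have hr0 : ∀ d : E, 0 ≤ inner ℝ r d := by
        intro d
        obtain ⟨e, he, hd⟩ := hfeas d
        apply tr_scalar _ ((1 / 2) * inner ℝ d (T d)) 0 e he
        intro t ht hte
        have := hqt d t (hd t ht hte)
        refine nonneg_of_mul_nonneg_right (a := t) ?_ ht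
        linarith
      have hrz : r = 0 := by
        have := hr0 (-r)
        rw [inner_neg_right] at this
        have h2 := real_inner_self_nonneg (x := r)
        exact inner_self_eq_zero.1 (by linarith : inner ℝ r r = 0)
      refine ⟨0, le_rfl, ?_, by simp, ?_⟩
      · rw [zero_smul, add_zero]; exact eq_neg_of_add_eq_zero_left hrz
      · intro x
        obtain ⟨e, he, hd⟩ := hfeas x
        have := hqt x (e / 2) (hd _ (by linarith) (by linarith))
        rw [hrz, inner_zero_left, mul_zero, zero_add] at this
        have := nonneg_of_mul_nonneg_right this (by positivity)
        linarith
    · have hdir : ∀ d : E, inner ℝ u d < 0 → 0 ≤ inner ℝ r d := by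
        intro d hd
        have hp : 0 < ‖d‖ ^ 2 + 1 := by positivity
        apply tr_scalar _ ((1 / 2) * inner ℝ d (T d)) 0 (-(2 * inner ℝ u d) / (‖d‖ ^ 2 + 1))
          (div_pos (by linarith) hp)
        intro t ht hte
        rw [lt_div_iff₀ hp] at hte
        have hf : ‖u + t • d‖ ≤ Δ := by
          refine (pow_le_pow_iff_left₀ (norm_nonneg _) hΔ.le two_ne_zero).1 ?_
          rw [hexp, heq]
          nlinarith
        have := hqt d t hf
        refine nonneg_of_mul_nonneg_right (a := t) ?_ ht
        linarith
      have huu : inner ℝ u u = Δ ^ 2 := by rw [real_inner_self_eq_norm_sq, heq]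
      have hD : 0 < Δ ^ 2 := by positivity
      obtain ⟨σ, hσ⟩ : ∃ σ : ℝ, σ = -(inner ℝ r u) / Δ ^ 2 := ⟨_, rfl⟩
      have hσD : σ * Δ ^ 2 = - inner ℝ r u := by rw [hσ]; field_simp
      have hσ0 : 0 ≤ σ := by
        rw [hσ]
        refine div_nonneg ?_ hD.le
        have := hdir (-u) (by rw [inner_neg_right, huu]; linarith)
        rwa [inner_neg_right] at this
      have hw : r + σ • u = 0 := by
        obtain ⟨w, hwd⟩ : ∃ w, w = r + σ • u := ⟨_, rfl⟩
        have huw : inner ℝ u w = 0 := by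
          rw [hwd, inner_add_right, inner_smul_right, huu, real_inner_comm]; linarith
        have hrw : inner ℝ r w = inner ℝ w w := by
          have h9 : inner ℝ w w = inner ℝ (r + σ • u) w := by rw [← hwd]
          rw [h9, inner_add_left (x := r), inner_smul_left, huw]; simp
        have h0 : 0 ≤ -inner ℝ w w := by
          apply tr_scalar _ (-inner ℝ r u) 0 1 one_pos
          intro t ht _
          have := hdir (-w - t • u) (by
            rw [inner_sub_right, inner_neg_right, inner_smul_right, huw, huu]; nlinarith)
          rw [inner_sub_right, inner_neg_right, inner_smul_right, hrw] at this
          linarith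
        have h2 := real_inner_self_nonneg (x := w)
        rw [← hwd]
        exact inner_self_eq_zero.1 (by linarith : inner ℝ w w = 0)
      have hP : ∀ x : E, inner ℝ u x ≠ 0 → 0 ≤ inner ℝ x (T x) + σ * inner ℝ x x := by
        intro x hx
        have hx0 : x ≠ 0 := by rintro rfl; simp at hx
        have hxx : 0 < ‖x‖ ^ 2 := by positivity
        obtain ⟨t, ht⟩ : ∃ t : ℝ, t = -(2 * inner ℝ u x) / ‖x‖ ^ 2 := ⟨_, rfl⟩
        have htx : t * ‖x‖ ^ 2 = -(2 * inner ℝ u x) := by rw [ht]; field_simp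
        have ht0 : t ≠ 0 := by
          rintro rfl
          apply hx; linarith
        have hf : ‖u + t • x‖ ≤ Δ := by
          refine (pow_le_pow_iff_left₀ (norm_nonneg _) hΔ.le two_ne_zero).1 ?_
          rw [hexp, heq]
          exact le_of_eq (by linear_combination t * htx)
        have h1 := hqt x t hf
        have hrx : inner ℝ r x = -σ * inner ℝ u x := by
          rw [eq_neg_of_add_eq_zero_left hw, inner_neg_left, inner_smul_left]; simp
        rw [hrx] at h1
        rw [real_inner_self_eq_norm_sq]
        have h2 : 0 ≤ t ^ 2 * (inner ℝ x (T x) + σ * ‖x‖ ^ 2) := by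
          have : inner ℝ u x = -(t * ‖x‖ ^ 2) / 2 := by linarith
          rw [this] at h1
          linarith
        exact nonneg_of_mul_nonneg_right h2 (by positivity)
      refine ⟨σ, hσ0, ?_, by rw [heq]; simp, ?_⟩
      · rw [eq_neg_iff_add_eq_zero, ← hw, hr]; abel
      · intro x
        by_cases hx : inner ℝ u x = 0
        · apply tr_scalar _ (2 * inner ℝ x (T u)) (inner ℝ u (T u) + σ * Δ ^ 2) 1 one_pos
          intro t ht _
          have := hP (x + t • u) (by
            rw [inner_add_right, inner_smul_right, huu, hx, zero_add]; positivity)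
          have h3 := hT u x
          have h4 := real_inner_comm u x
          simp only [inner_add_left, inner_add_right, map_add, map_smul, inner_smul_left,
            inner_smul_right, huu, conj_trivial, h3, h4.symm, hx] at this
          rw [real_inner_comm, hx] at h4
          simp only [real_inner_comm u x, hx] at this
          linarith
        · exact hP x hx
  · rintro ⟨σ, hσ, hg, hc, hP⟩ s hs
    have h1 := hP (s - u)
    have hg' : g = -(T u + σ • u) := by rw [hg, neg_neg]
    have h2 := hT u s
    have h5 : σ * ‖s‖ ^ 2 ≤ σ * ‖u‖ ^ 2 := by
      rcases hσ.eq_or_lt with h | h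
      · rw [← h]; simp
      · have : ‖u‖ = Δ := by
          rcases mul_eq_zero.1 hc with h' | h' <;> linarith
        rw [this]; gcongr
    rw [← real_inner_self_eq_norm_sq, ← real_inner_self_eq_norm_sq] at h5
    have h3 := real_inner_comm s (T u)
    have h4 := real_inner_comm u (T u)
    have h6 := real_inner_comm u s
    rw [hg']
    simp only [inner_add_left, inner_sub_left, inner_sub_right, map_sub, inner_neg_left,
      inner_smul_left, conj_trivial] at h1 ⊢
    rw [h3, h4]
    rw [h2, h6] at h1
    linarith

/-- Moré–Sorensen optimality conditions for the trust-region subproblem: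
`s*` with `‖s*‖ ≤ Δ` is a global minimizer of `q(s) = gᵀs + ½ sᵀBs` over the
closed Euclidean ball of radius `Δ` iff there is `σ* ≥ 0` with
`(B + σ*I)s* = -g`, `σ*(Δ - ‖s*‖) = 0` and `B + σ*I` positive semidefinite. -/
theorem trust_region_global_min_iff (n : ℕ) (B : Matrix (Fin n) (Fin n) ℝ)
    (hB : B.IsSymm) (g : EuclideanSpace ℝ (Fin n)) (Δ : ℝ) (hΔ : 0 < Δ)
    (sstar : EuclideanSpace ℝ (Fin n)) (hs : ‖sstar‖ ≤ Δ) :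
    (∀ s : EuclideanSpace ℝ (Fin n), ‖s‖ ≤ Δ →
        g ⬝ᵥ sstar + (1 / 2) * sstar ⬝ᵥ B.mulVec sstar ≤
          g ⬝ᵥ s + (1 / 2) * s ⬝ᵥ B.mulVec s) ↔
      ∃ σstar : ℝ, 0 ≤ σstar ∧
        (B + σstar • (1 : Matrix (Fin n) (Fin n) ℝ)).mulVec sstar = -g ∧
        σstar * (Δ - ‖sstar‖) = 0 ∧
        (B + σstar • (1 : Matrix (Fin n) (Fin n) ℝ)).PosSemidef := by
  have hsym : ∀ v w : Fin n → ℝ, v ⬝ᵥ B.mulVec w = w ⬝ᵥ B.mulVec v := by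
    intro v w
    rw [dotProduct_mulVec, ← mulVec_transpose, hB.eq, dotProduct_comm]
  have hin : ∀ x y : EuclideanSpace ℝ (Fin n), inner ℝ x y = x.ofLp ⬝ᵥ y.ofLp := by
    intro x y
    rw [EuclideanSpace.inner_eq_star_dotProduct, dotProduct_comm]; simp
  have key := tr_abstract (Matrix.toEuclideanLin B) (by
    intro x y
    simp only [hin, Matrix.ofLp_toLpLin, Matrix.toLin'_apply]
    exact hsym _ _) g Δ hΔ sstar hs
  simp only [hin, Matrix.ofLp_toLpLin, Matrix.toLin'_apply] at key
  refine key.trans (exists_congr fun σ => and_congr_right fun _ => ?_)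
  refine and_congr ?_ (and_congr_right fun _ => ?_)
  · rw [← (WithLp.ofLp_injective 2).eq_iff]
    simp [Matrix.add_mulVec, Matrix.smul_mulVec]
  · have hH : (B + σ • (1 : Matrix (Fin n) (Fin n) ℝ)).IsHermitian := by
      have hB' := hB.eq
      simp [Matrix.IsHermitian, Matrix.conjTranspose_eq_transpose_of_trivial, hB']
    rw [Matrix.posSemidef_iff_dotProduct_mulVec]
    constructor
    · intro h
      refine ⟨hH, fun x => ?_⟩
      have := h (WithLp.toLp 2 x)
      simpa [Matrix.add_mulVec, Matrix.smul_mulVec] using this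
    · rintro ⟨-, h⟩ x
      have := h x.ofLp
      simpa [Matrix.add_mulVec, Matrix.smul_mulVec] using this
end

section
/- Let B be an n×n real symmetric matrix, g ∈ ℝⁿ, and Δ > 0. Suppose s* ∈ ℝⁿ satisfies ‖s*‖₂ ≤ Δ and there exists σ* ≥ 0 such that (B + σ*I) s* = −g, σ*(Δ − ‖s*‖₂) = 0, and B + σ*I is positive definite. Then s* is the unique global minimizer of q(s) = gᵀs + (1/2) sᵀBs over the closed Euclidean ball {s ∈ ℝⁿ : ‖s‖₂ ≤ Δ}. -/
open Matrix

theorem tr_aux (n : ℕ) (B : Matrix (Fin n) (Fin n) ℝ)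
    (hB : B.IsSymm) (g x y : Fin n → ℝ) (σ : ℝ)
    (heq : (B + σ • (1 : Matrix (Fin n) (Fin n) ℝ)).mulVec y = -g)
    (hn : 0 ≤ σ * (y ⬝ᵥ y - x ⬝ᵥ x))
    (hpd : (B + σ • (1 : Matrix (Fin n) (Fin n) ℝ)).PosDef) (hne : x ≠ y) :
    g ⬝ᵥ y + (1 / 2) * y ⬝ᵥ B.mulVec y < g ⬝ᵥ x + (1 / 2) * x ⬝ᵥ B.mulVec x := by
  have hp := hpd.dotProduct_mulVec_pos (sub_ne_zero.mpr hne)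
  have hg : g = -(B.mulVec y + σ • y) := by
    rw [← neg_eq_iff_eq_neg, ← heq, add_mulVec, smul_mulVec, one_mulVec]
  have hsym : x ⬝ᵥ B.mulVec y = y ⬝ᵥ B.mulVec x := by
    rw [dotProduct_mulVec, ← mulVec_transpose, hB.eq, dotProduct_comm]
  have c1 : B.mulVec y ⬝ᵥ x = x ⬝ᵥ B.mulVec y := dotProduct_comm _ _
  have c2 : B.mulVec y ⬝ᵥ y = y ⬝ᵥ B.mulVec y := dotProduct_comm _ _
  have c3 : y ⬝ᵥ x = x ⬝ᵥ y := dotProduct_comm _ _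
  simp only [star_trivial, add_mulVec, smul_mulVec, one_mulVec, mulVec_sub, sub_dotProduct,
    dotProduct_sub, dotProduct_add, dotProduct_smul, smul_eq_mul] at hp
  rw [hg]
  simp only [neg_dotProduct, add_dotProduct, smul_dotProduct, smul_eq_mul]
  rw [c1, c2, c3]
  rw [c3] at hp
  linarith

/-- If `‖s*‖ ≤ Δ` and there is `σ* ≥ 0` with `(B + σ*I)s* = -g`,
`σ*(Δ - ‖s*‖) = 0` and `B + σ*I` positive definite, then `s*` is the unique
global minimizer of `q(s) = gᵀs + ½ sᵀBs` over the closed ball `‖s‖ ≤ Δ`. -/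
theorem trust_region_unique_global_min (n : ℕ) (B : Matrix (Fin n) (Fin n) ℝ)
    (hB : B.IsSymm) (g : EuclideanSpace ℝ (Fin n)) (Δ : ℝ) (hΔ : 0 < Δ)
    (sstar : EuclideanSpace ℝ (Fin n)) (hs : ‖sstar‖ ≤ Δ)
    (σstar : ℝ) (hσ : 0 ≤ σstar)
    (heq : (B + σstar • (1 : Matrix (Fin n) (Fin n) ℝ)).mulVec sstar = -g)
    (hcomp : σstar * (Δ - ‖sstar‖) = 0)
    (hpd : (B + σstar • (1 : Matrix (Fin n) (Fin n) ℝ)).PosDef) :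
    ∀ s : EuclideanSpace ℝ (Fin n), ‖s‖ ≤ Δ → s ≠ sstar →
      g ⬝ᵥ sstar + (1 / 2) * sstar ⬝ᵥ B.mulVec sstar <
        g ⬝ᵥ s + (1 / 2) * s ⬝ᵥ B.mulVec s := by
  intro s hsn hne
  have nx : ∀ v : EuclideanSpace ℝ (Fin n), v.ofLp ⬝ᵥ v.ofLp = ‖v‖ ^ 2 := by
    intro v
    rw [EuclideanSpace.real_norm_sq_eq]
    simp [dotProduct, sq]
  refine tr_aux n B hB g s sstar σstar heq ?_ hpd (fun h => hne (WithLp.ofLp_injective 2 h))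
  rw [nx, nx]
  rcases mul_eq_zero.mp hcomp with h | h
  · simp [h]
  · have h2 : ‖sstar‖ = Δ := by linarith
    rw [h2]
    have := norm_nonneg s
    exact mul_nonneg hσ (by nlinarith)
end

section
/- Let B be an n×n real symmetric matrix, g ∈ ℝⁿ, Δ > 0, and σ₀ ∈ ℝ such that B + σ₀I is positive definite, with RᵀR = B + σ₀I for an invertible matrix R. For σ near σ₀ define s(σ) = −(B + σI)⁻¹ g, write s = s(σ₀), and assume s ≠ 0. Let q = (Rᵀ)⁻¹ s. Then the function φ(σ) = 1/Δ − 1/‖s(σ)‖₂ is differentiable at σ₀ with φ′(σ₀) = −‖q‖₂²/‖s‖₂³, and the Newton iterate for φ(σ) = 0 is σ₁ = σ₀ − φ(σ₀)/φ′(σ₀) = σ₀ + (‖s‖₂²/‖q‖₂²) · ((‖s‖₂ − Δ)/Δ). -/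
open Matrix

section
attribute [local instance] Matrix.linftyOpNormedRing Matrix.linftyOpNormedAlgebra

theorem ms_deriv_inv (n : ℕ) (B : Matrix (Fin n) (Fin n) ℝ) (σ₀ : ℝ)
    (hA : IsUnit (B + σ₀ • (1 : Matrix (Fin n) (Fin n) ℝ))) (i j : Fin n) :
    HasDerivAt (fun σ : ℝ => (B + σ • (1 : Matrix (Fin n) (Fin n) ℝ))⁻¹ i j)
      ((-((B + σ₀ • (1 : Matrix (Fin n) (Fin n) ℝ))⁻¹ * (B + σ₀ • (1 : Matrix (Fin n) (Fin n) ℝ))⁻¹)) i j) σ₀ := by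
  obtain ⟨u, hu⟩ := hA
  have h1 : HasDerivAt (fun σ : ℝ => B + σ • (1 : Matrix (Fin n) (Fin n) ℝ)) 1 σ₀ := by
    have h := ((hasDerivAt_id σ₀).smul_const (1 : Matrix (Fin n) (Fin n) ℝ)).const_add B
    rw [one_smul] at h
    exact h
  have h2 := hasFDerivAt_ringInverse (𝕜 := ℝ) u
  rw [hu] at h2
  have h3 := h2.comp_hasDerivAt σ₀ h1
  have h4 : (↑u⁻¹ : Matrix (Fin n) (Fin n) ℝ) = (B + σ₀ • (1 : Matrix (Fin n) (Fin n) ℝ))⁻¹ := by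
    rw [← hu, Matrix.coe_units_inv]
  have h5 := (LinearMap.toContinuousLinearMap (Matrix.entryLinearMap ℝ ℝ i j)).hasFDerivAt.comp_hasDerivAt σ₀ h3
  have e1 : (fun σ : ℝ => (B + σ • (1 : Matrix (Fin n) (Fin n) ℝ))⁻¹ i j) =
      ⇑(LinearMap.toContinuousLinearMap (entryLinearMap ℝ ℝ i j)) ∘ Ring.inverse ∘
        fun σ : ℝ => B + σ • (1 : Matrix (Fin n) (Fin n) ℝ) := by
    funext σ
    simp [Matrix.nonsing_inv_eq_ringInverse]
  rw [e1]
  refine h5.congr_deriv ?_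
  simp [h4]
  rfl
end

/-- Derivative of the Moré–Sorensen secular function `φ(σ) = 1/Δ − 1/‖s(σ)‖`
at `σ₀`, where `s(σ) = -(B+σI)⁻¹g`, `RᵀR = B+σ₀I`, `q = (Rᵀ)⁻¹ s(σ₀)`,
and the resulting Newton iterate. -/
theorem more_sorensen_newton_iterate (n : ℕ) (B : Matrix (Fin n) (Fin n) ℝ)
    (hB : B.IsSymm) (g : Fin n → ℝ) (Δ : ℝ) (hΔ : 0 < Δ) (σ₀ : ℝ)
    (hpd : (B + σ₀ • (1 : Matrix (Fin n) (Fin n) ℝ)).PosDef)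
    (R : Matrix (Fin n) (Fin n) ℝ) (hR : IsUnit R)
    (hfact : R.transpose * R = B + σ₀ • (1 : Matrix (Fin n) (Fin n) ℝ))
    (s : ℝ → EuclideanSpace ℝ (Fin n))
    (hs : ∀ σ : ℝ,
      s σ = -((B + σ • (1 : Matrix (Fin n) (Fin n) ℝ))⁻¹.mulVec g))
    (hs0 : s σ₀ ≠ 0)
    (q : EuclideanSpace ℝ (Fin n)) (hq : q = R.transpose⁻¹.mulVec (s σ₀))
    (φ : ℝ → ℝ) (hφ : ∀ σ : ℝ, φ σ = 1 / Δ - 1 / ‖s σ‖) :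
    HasDerivAt φ (-‖q‖ ^ 2 / ‖s σ₀‖ ^ 3) σ₀ ∧
      σ₀ - φ σ₀ / (-‖q‖ ^ 2 / ‖s σ₀‖ ^ 3) =
        σ₀ + (‖s σ₀‖ ^ 2 / ‖q‖ ^ 2) * ((‖s σ₀‖ - Δ) / Δ) := by
  have hA : IsUnit (B + σ₀ • (1 : Matrix (Fin n) (Fin n) ℝ)) := hpd.isUnit
  set A := B + σ₀ • (1 : Matrix (Fin n) (Fin n) ℝ) with hAdef
  have hd := ms_deriv_inv n B σ₀ hA
  rw [← hAdef] at hd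
  have hsd : HasDerivAt s (WithLp.toLp 2 (-(A⁻¹ *ᵥ (s σ₀)))) σ₀ := by
    have h1 : s = fun σ => WithLp.toLp 2 (-((B + σ • (1 : Matrix (Fin n) (Fin n) ℝ))⁻¹ *ᵥ g)) := by
      funext σ
      ext i
      rw [hs σ]
    rw [hs σ₀, ← hAdef]
    rw [h1]
    have hp : HasDerivAt (fun σ : ℝ => -((B + σ • (1 : Matrix (Fin n) (Fin n) ℝ))⁻¹ *ᵥ g))
        (-(A⁻¹ *ᵥ (-(A⁻¹ *ᵥ g)))) σ₀ := by
      refine hasDerivAt_pi.2 ?_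
      intro i
      have h2 := HasDerivAt.fun_sum (u := Finset.univ) (fun j _ => ((hd i j).mul_const (g j)))
      refine h2.fun_neg.congr_deriv ?_
      rw [mulVec_neg, mulVec_mulVec]
      simp [mulVec, dotProduct]
    exact (PiLp.hasFDerivAt_toLp (𝕜 := ℝ) 2 _).comp_hasDerivAt σ₀ hp
  have hRt : IsUnit R.transpose := (Matrix.isUnit_transpose R).2 hR
  have hqq : ‖q‖ ^ 2 = (s σ₀) ⬝ᵥ (A⁻¹ *ᵥ (s σ₀)) := by
    rw [EuclideanSpace.real_norm_sq_eq]
    have : ∑ i, q i ^ 2 = (q : Fin n → ℝ) ⬝ᵥ q := by simp [dotProduct, sq]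
    rw [this, hq, ← hfact, Matrix.mul_inv_rev, ← mulVec_mulVec, dotProduct_mulVec (s σ₀ : Fin n → ℝ),
      ← Matrix.transpose_nonsing_inv, Matrix.mulVec_transpose]
  have hqpos : 0 < ‖q‖ ^ 2 := by
    have hq0 : q ≠ 0 := by
      rintro rfl
      apply hs0
      have h := congrArg (fun v => R.transpose *ᵥ v) hq
      simp only [mulVec_mulVec] at h
      rw [Matrix.mul_nonsing_inv _ ((Matrix.isUnit_iff_isUnit_det _).1 hRt)] at h
      ext i
      have := congrFun h i
      simpa using this.symm
    positivity
  have hspos : 0 < ‖s σ₀‖ := norm_pos_iff.2 hs0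
  constructor
  · have hn : HasDerivAt (fun σ => ‖s σ‖) (-‖q‖ ^ 2 / ‖s σ₀‖) σ₀ := by
      have h1 := hsd.norm_sq
      have h2 := h1.sqrt (by positivity)
      have h3 : (fun σ => ‖s σ‖) = fun σ => √(‖s σ‖ ^ 2) := by
        funext σ; rw [Real.sqrt_sq (norm_nonneg _)]
      rw [h3]
      convert h2 using 1
      rw [Real.sqrt_sq (norm_nonneg _), hqq]
      have : inner ℝ (s σ₀) (WithLp.toLp 2 (-(A⁻¹ *ᵥ (s σ₀)))) = - ((s σ₀) ⬝ᵥ (A⁻¹ *ᵥ (s σ₀))) := by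
        simp [PiLp.inner_apply, dotProduct, mul_comm]
      rw [this]
      field_simp
    have hf : φ = fun σ => 1 / Δ - (‖s σ‖)⁻¹ := by
      funext σ; rw [hφ, one_div ‖s σ‖]
    rw [hf]
    refine ((hn.fun_inv hspos.ne').const_sub (1 / Δ)).congr_deriv ?_
    field_simp
  · rw [hφ]
    have : ‖q‖ ≠ 0 := by
      intro h; rw [h] at hqpos; simp at hqpos
    field_simp
    ring
end

section
/- Let H be an n×n real symmetric positive definite matrix and s, y ∈ ℝⁿ with yᵀs > 0. Then the BFGS inverse update H₊ = H + ((yᵀs + yᵀHy)/(yᵀs)²) s sᵀ − (1/(yᵀs)) (H y sᵀ + s yᵀ H) is symmetric positive definite. -/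
open Matrix

/-- If `H` is symmetric positive definite and `yᵀs > 0`, then the BFGS inverse
update `H₊ = H + ((yᵀs + yᵀHy)/(yᵀs)²) s sᵀ − (1/(yᵀs))(H y sᵀ + s yᵀH)` is
symmetric positive definite. -/
theorem bfgs_inverse_update_posDef (n : ℕ)
    (H : Matrix (Fin n) (Fin n) ℝ) (hH : H.PosDef) (s y : Fin n → ℝ)
    (hys : 0 < y ⬝ᵥ s) :
    (H + ((y ⬝ᵥ s + y ⬝ᵥ H.mulVec y) / (y ⬝ᵥ s) ^ 2) • Matrix.vecMulVec s s -
        (1 / (y ⬝ᵥ s)) •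
          (Matrix.vecMulVec (H.mulVec y) s +
            Matrix.vecMulVec s (H.mulVec y))).PosDef := by
  have hsym : Hᵀ = H := by
    have := hH.isHermitian
    rwa [Matrix.IsHermitian, Matrix.conjTranspose_eq_transpose_of_trivial] at this
  refine Matrix.PosDef.of_dotProduct_mulVec_pos ?_ ?_
  · rw [Matrix.IsHermitian, Matrix.conjTranspose_eq_transpose_of_trivial]
    simp only [Matrix.transpose_sub, Matrix.transpose_add, Matrix.transpose_smul,
      Matrix.transpose_vecMulVec, hsym]
    rw [add_comm (Matrix.vecMulVec s (H *ᵥ y))]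
  · intro x hx
    have hcomm : y ⬝ᵥ H *ᵥ x = x ⬝ᵥ H *ᵥ y := by
      rw [Matrix.dotProduct_mulVec, ← Matrix.mulVec_transpose, hsym, dotProduct_comm]
    have key : star x ⬝ᵥ (H + ((y ⬝ᵥ s + y ⬝ᵥ H.mulVec y) / (y ⬝ᵥ s) ^ 2) • Matrix.vecMulVec s s -
        (1 / (y ⬝ᵥ s)) •
          (Matrix.vecMulVec (H.mulVec y) s +
            Matrix.vecMulVec s (H.mulVec y))) *ᵥ x
        = (x - ((s ⬝ᵥ x) / (y ⬝ᵥ s)) • y) ⬝ᵥ H *ᵥ (x - ((s ⬝ᵥ x) / (y ⬝ᵥ s)) • y)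
          + (s ⬝ᵥ x) ^ 2 / (y ⬝ᵥ s) := by
      simp only [star_trivial, Matrix.sub_mulVec, Matrix.add_mulVec, Matrix.smul_mulVec,
        Matrix.vecMulVec_mulVec, Matrix.mulVec_sub, Matrix.mulVec_smul, dotProduct_sub,
        dotProduct_add, dotProduct_smul, sub_dotProduct, smul_dotProduct, smul_eq_mul,
        op_smul_eq_smul, hcomm]
      rw [dotProduct_comm (H *ᵥ y) x, dotProduct_comm x s]
      have := hys.ne'
      field_simp
      ring
    rw [key]
    by_cases ha : s ⬝ᵥ x = 0
    · have := hH.dotProduct_mulVec_pos hx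
      simpa [ha] using this
    · have h1 := hH.posSemidef.dotProduct_mulVec_nonneg (x - ((s ⬝ᵥ x) / (y ⬝ᵥ s)) • y)
      rw [star_trivial] at h1
      have h2 : 0 < (s ⬝ᵥ x) ^ 2 / (y ⬝ᵥ s) := by positivity
      linarith
end
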